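/- arXiv:1108.4980 — 3 statements merged into one kernel-verified Lean document; each statement's English description precedes it below -/
import Mathlib

section
/- Let a ≥ 2 and b be integers with gcd(a,b) = 1, and let x > 0 be real. Then F_{(a,b)}(x) = (π/x) · Σ_{n∈ℤ} (−1)^n · csch(π(a n + b)/x) / (a n + b), where csch(z) = 2/(e^{z} − e^{−z}) and the sum over n converges absolutely. (Note a n + b ≠ 0 for all n ∈ ℤ since a ≥ 2 and gcd(a,b) = 1.) -/
open Filter

/-!
Partial fractions of the cotangent give `∑ₘ 1 / (m² - z²) = -π cot (π z) / z` over `m ∈ ℤ`.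
Replacing `z` by `z / 2` isolates the even `m`, and twice the even part minus the whole is the
alternating sum; since `cot w - cot (2 w) = 1 / sin (2 w)` it equals `-π / (z sin (π z))`.
At `z = i c / x` this evaluates the inner sum, so only the outer sum remains. Because
`|sinh u| ≥ |u|`, its terms are `O(1 / (a n + b)²)`, so it converges unconditionally and in
particular along the symmetric intervals.
-/

theorem mul_add_ne_zero_of_isCoprime {R : Type*} [CommRing R] {a b : R} (hab : IsCoprime a b)
    (ha : ¬IsUnit a) (n : R) : a * n + b ≠ 0 := fun h =>
  ha (hab.isUnit_of_dvd ((dvd_add_right (dvd_mul_right a n)).mp (h ▸ dvd_zero a)))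

theorem tendsto_sum_Ioo_neg_natCast {M : Type*} [AddCommMonoid M] [TopologicalSpace M] {f : ℤ → M}
    {s : M} (hf : HasSum f s) :
    Tendsto (fun N : ℕ => ∑ n ∈ Finset.Ioo (-(N : ℤ)) N, f n) atTop (nhds s) := by
  have hIoo : Tendsto (fun N : ℤ => Finset.Ioo (-N) N) atTop atTop :=
    (SummationFilter.symmetricIoo ℤ).le_atTop
  exact hf.comp (hIoo.comp tendsto_natCast_atTop_atTop)

section AlternatingSum

theorem hasSum_ite_even_iff {M : Type*} [AddCommMonoid M] [TopologicalSpace M] {f : ℤ → M}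
    {s : M} :
    HasSum (fun m : ℤ => if Even m then f m else 0) s ↔ HasSum (fun k : ℤ => f (2 * k)) s := by
  rw [← (mul_right_injective₀ (two_ne_zero' ℤ)).hasSum_iff]
  · simp only [Function.comp_def, even_two_mul, if_true]
  · intro m hm
    exact if_neg fun h => hm (h.two_dvd.imp fun _ => Eq.symm)

theorem hasSum_neg_one_zpow_mul {K : Type*} [DivisionRing K] [TopologicalSpace K]
    [IsTopologicalRing K] {f : ℤ → K} {s e : K} (hf : HasSum f s)
    (he : HasSum (fun k : ℤ => f (2 * k)) e) :
    HasSum (fun m : ℤ => (-1) ^ m * f m) (2 * e - s) := by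
  refine (((hasSum_ite_even_iff.mpr he).mul_left 2).sub hf).congr_fun fun m => ?_
  rcases Int.even_or_odd m with hm | hm
  · rw [if_pos hm, hm.neg_one_zpow, one_mul, two_mul, add_sub_cancel_right]
  · rw [if_neg (Int.not_even_iff_odd.mpr hm), hm.neg_one_zpow, mul_zero, zero_sub, neg_one_mul]

end AlternatingSum

section PartialFractions

open Complex

open scoped Real

theorem cot_sub_cot_two_mul {w : ℂ} (hw : sin (2 * w) ≠ 0) :
    cot w - cot (2 * w) = 1 / sin (2 * w) := by
  rw [sin_two_mul] at hw
  obtain ⟨hs, hc⟩ : sin w ≠ 0 ∧ cos w ≠ 0 := by simpa using hw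
  rw [cot, cot, sin_two_mul, cos_two_mul]
  field_simp
  ring

variable {z : ℂ}

theorem div_two_mem_integerComplement (hz : z ∈ integerComplement) :
    z / 2 ∈ integerComplement := by
  rintro ⟨n, hn⟩
  refine hz ⟨2 * n, ?_⟩
  push_cast
  rw [hn, mul_div_cancel₀ _ two_ne_zero]

theorem hasSum_nat_one_div_sq_sub_sq (hz : z ∈ integerComplement) :
    HasSum (fun n : ℕ => 1 / (((n : ℂ) + 1) ^ 2 - z ^ 2))
      (-(π * cot (π * z) - 1 / z) / (2 * z)) := by
  have hz0 : z ≠ 0 := integerComplement.ne_zero hz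
  have hcot : HasSum (cotTerm z) (π * cot (π * z) - 1 / z) := by
    rw [cot_series_rep' hz]
    exact (summable_cotTerm hz).hasSum
  convert! hcot.neg.div_const (2 * z) using 2 with n
  rw [cotTerm_identity hz, neg_div, mul_div_cancel_left₀ _ (mul_ne_zero two_ne_zero hz0),
    ← one_div_neg_eq_neg_one_div]
  ring_nf

theorem hasSum_int_one_div_sq_sub_sq (hz : z ∈ integerComplement) :
    HasSum (fun m : ℤ => 1 / ((m : ℂ) ^ 2 - z ^ 2)) (-(π * cot (π * z) / z)) := by
  have hz0 : z ≠ 0 := integerComplement.ne_zero hz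
  have hpos := hasSum_nat_one_div_sq_sub_sq hz
  convert! HasSum.of_add_one_of_neg_add_one (f := fun m : ℤ => 1 / ((m : ℂ) ^ 2 - z ^ 2))
    (by simpa using hpos) (by simpa [← neg_add_rev, add_comm] using hpos) using 1
  rw [Int.cast_zero]
  field_simp
  ring

theorem hasSum_neg_one_zpow_div_sq_sub_sq (hz : z ∈ integerComplement) :
    HasSum (fun m : ℤ => (-1) ^ m / ((m : ℂ) ^ 2 - z ^ 2)) (-(π / (z * sin (π * z)))) := by
  have hz0 : z ≠ 0 := integerComplement.ne_zero hz
  have heven : HasSum (fun k : ℤ => 1 / (((2 * k : ℤ) : ℂ) ^ 2 - z ^ 2))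
      (-(π * cot (π * (z / 2)) / (z / 2)) / 4) := by
    refine ((hasSum_int_one_div_sq_sub_sq (div_two_mem_integerComplement hz)).div_const 4).congr_fun
      fun k => ?_
    rw [div_div]
    push_cast
    ring_nf
  have hcsc : cot (π * (z / 2)) - cot (π * z) = 1 / sin (π * z) := by
    have h2 : π * z = 2 * (π * (z / 2)) := by ring
    rw [h2]
    exact cot_sub_cot_two_mul (h2 ▸ sin_pi_mul_ne_zero hz)
  convert! hasSum_neg_one_zpow_mul (hasSum_int_one_div_sq_sub_sq hz) heven using 1
  · simp only [mul_one_div]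
  · calc -(π / (z * sin (π * z))) = -(π / z * (1 / sin (π * z))) := by
          rw [div_mul_div_comm, mul_one]
      _ = 2 * (-(π * cot (π * (z / 2)) / (z / 2)) / 4) - -(π * cot (π * z) / z) := by
          rw [← hcsc]
          field_simp
          ring

end PartialFractions

section HyperbolicSine

open Real

theorem I_mul_ofReal_mem_integerComplement {t : ℝ} (ht : t ≠ 0) :
    Complex.I * t ∈ Complex.integerComplement := by
  rintro ⟨n, hn⟩
  simpa [ht.symm] using congrArg Complex.im hn

theorem hasSum_neg_one_zpow_div_sq_add_sq {t : ℝ} (ht : t ≠ 0) :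
    HasSum (fun m : ℤ => (-1) ^ m / ((m : ℝ) ^ 2 + t ^ 2)) (π / (t * sinh (π * t))) := by
  rw [← Complex.hasSum_ofReal]
  convert! hasSum_neg_one_zpow_div_sq_sub_sq (I_mul_ofReal_mem_integerComplement ht) using 1
  · simp [mul_pow]
  · have hsin : Complex.sin (π * (Complex.I * t)) = Complex.sinh (π * t) * Complex.I := by
      rw [← Complex.sin_mul_I, mul_right_comm, mul_assoc]
    have hdenom : Complex.I * t * (Complex.sinh (π * t) * Complex.I) =
        -(t * Complex.sinh (π * t)) := by
      linear_combination t * Complex.sinh (π * t) * Complex.I_mul_I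
    rw [hsin, hdenom, div_neg, neg_neg]
    push_cast
    rfl

theorem hasSum_neg_one_zpow_div_mul_sq_add_sq {x c : ℝ} (hx : x ≠ 0) (hc : c ≠ 0) :
    HasSum (fun m : ℤ => (-1) ^ m / ((x * m) ^ 2 + c ^ 2))
      (π / x * (c * sinh (π / x * c))⁻¹) := by
  convert! (hasSum_neg_one_zpow_div_sq_add_sq (div_ne_zero hc hx)).div_const (x ^ 2) using 1
  · funext m
    rw [div_div, add_mul, div_pow, div_mul_cancel₀ _ (pow_ne_zero 2 hx), mul_pow, mul_comm (x ^ 2)]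
  · rw [← mul_div_assoc π, mul_div_right_comm π]
    field_simp

theorem abs_inv_mul_sinh_le (k c : ℝ) : |(c * sinh (k * c))⁻¹| ≤ |k|⁻¹ * (c ^ 2)⁻¹ := by
  rcases eq_or_ne (k * c) 0 with h0 | h0
  · rw [h0, sinh_zero, mul_zero, inv_zero, abs_zero]
    positivity
  · have hle : |k * c| ≤ |sinh (k * c)| := by
      rw [abs_sinh]
      exact self_le_sinh_iff.mpr (abs_nonneg _)
    obtain ⟨hk, hc⟩ := mul_ne_zero_iff.mp h0
    calc |(c * sinh (k * c))⁻¹| = (|c| * |sinh (k * c)|)⁻¹ := by rw [abs_inv, abs_mul]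
      _ ≤ (|c| * |k * c|)⁻¹ := by gcongr
      _ = |k|⁻¹ * (c ^ 2)⁻¹ := by rw [abs_mul, ← sq_abs c, ← mul_inv]; ring

theorem summable_inv_linear_sq {a : ℝ} (ha : a ≠ 0) (b : ℝ) :
    Summable (fun n : ℤ => ((a * n + b) ^ 2)⁻¹) := by
  have hshift : Summable (fun n : ℤ => 1 / |n + b / a| ^ (2 : ℝ)) :=
    (summable_one_div_int_add_rpow (b / a) 2).mpr one_lt_two
  refine (hshift.mul_left (a ^ 2)⁻¹).congr fun n => ?_
  rw [rpow_two, sq_abs, one_div, ← mul_inv, ← mul_pow, mul_add, mul_div_cancel₀ _ ha]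

theorem summable_neg_one_zpow_mul_inv_linear_mul_sinh {a : ℝ} (ha : a ≠ 0) (b k : ℝ) :
    Summable (fun n : ℤ => (-1) ^ n * ((a * n + b) * sinh (k * (a * n + b)))⁻¹) := by
  refine ((summable_inv_linear_sq ha b).mul_left |k|⁻¹).of_norm_bounded fun n => ?_
  rw [norm_mul, norm_zpow, norm_neg, norm_one, one_zpow, one_mul, norm_eq_abs]
  exact abs_inv_mul_sinh_le k _

theorem two_div_exp_sub_exp_neg (u : ℝ) : 2 / (exp u - exp (-u)) = (sinh u)⁻¹ := by
  rw [sinh_eq, inv_div]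

theorem rapidly_converging_formula_general {a b x : ℝ} (ha : a ≠ 0)
    (hab : ∀ n : ℤ, a * n + b ≠ 0) (hx : x ≠ 0) :
    HasSum (fun n : ℤ => ∑' m : ℤ, (-1 : ℝ) ^ (m + n) / ((x * m) ^ 2 + (a * n + b) ^ 2))
      (π / x * ∑' n : ℤ, (-1 : ℝ) ^ n *
        (2 / (exp (π * (a * n + b) / x) - exp (-(π * (a * n + b) / x)))) / (a * n + b)) := by
  have hinner (n : ℤ) : ∑' m : ℤ, (-1 : ℝ) ^ (m + n) / ((x * m) ^ 2 + (a * n + b) ^ 2) =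
      π / x * ((-1) ^ n * ((a * n + b) * sinh (π / x * (a * n + b)))⁻¹) := by
    simp only [zpow_add₀ (neg_ne_zero.mpr (one_ne_zero' ℝ)), mul_div_right_comm]
    rw [tsum_mul_right, (hasSum_neg_one_zpow_div_mul_sq_add_sq hx (hab n)).tsum_eq]
    ring
  have houter (n : ℤ) : (-1 : ℝ) ^ n *
        (2 / (exp (π * (a * n + b) / x) - exp (-(π * (a * n + b) / x)))) / (a * n + b) =
      (-1) ^ n * ((a * n + b) * sinh (π / x * (a * n + b)))⁻¹ := by
    rw [two_div_exp_sub_exp_neg, mul_div_right_comm π, mul_div_assoc, mul_inv_rev, div_eq_mul_inv]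
  simp only [hinner, houter]
  exact (summable_neg_one_zpow_mul_inv_linear_mul_sinh ha b (π / x)).hasSum.mul_left (π / x)

end HyperbolicSine

/-- For integers `a ≥ 2`, `b` with `gcd(a,b) = 1` and real `x > 0`,
`F_{(a,b)}(x) = (π/x) ∑_{n ∈ ℤ} (-1)^n csch(π(an+b)/x)/(an+b)`,
where `csch z = 2/(e^z - e^{-z})`. -/
theorem rapidly_converging_formula (a b : ℤ) (ha : 2 ≤ a) (hab : Int.gcd a b = 1)
    (x : ℝ) (hx : 0 < x) :
    Tendsto (fun N : ℕ => ∑ n ∈ Finset.Ioo (-(N : ℤ)) (N : ℤ),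
        ∑' m : ℤ, (-1 : ℝ) ^ (m + n) / ((x * m) ^ 2 + ((a : ℝ) * n + b) ^ 2))
      atTop
      (nhds (Real.pi / x *
        ∑' n : ℤ, (-1 : ℝ) ^ n *
          (2 / (Real.exp (Real.pi * ((a : ℝ) * n + b) / x) -
                Real.exp (-(Real.pi * ((a : ℝ) * n + b) / x)))) /
          ((a : ℝ) * n + b))) := by
  have hne := mul_add_ne_zero_of_isCoprime (Int.isCoprime_iff_gcd_eq_one.mpr hab)
    (by grind [Int.isUnit_iff])
  exact tendsto_sum_Ioo_neg_natCast <| rapidly_converging_formula_general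
    (Int.cast_ne_zero.mpr (by lia)) (fun n => mod_cast hne n) hx.ne'
end

section
/- For every real x > 0, F_{(2,1)}(x) = 0; that is, lim_{N→∞} Σ_{n=−N+1}^{N−1} Σ_{m∈ℤ} (−1)^{m+n} / ((x m)² + (2n+1)²) = 0. -/
open Filter

/-!
The reflection `n ↦ -1 - n` fixes `(2n + 1)²` and flips the sign `(-1)ⁿ`, so it pairs off rows of
opposite value. In the range `-N < n < N` it leaves only the row `n = N - 1` without a partner, and
that row tends to `0` by dominated convergence.
-/

section Reflection

variable {M : Type*} [AddCommMonoid M] {f : ℤ → M}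

lemma sum_Ico_neg_self_eq_zero_of_reflect (hf : ∀ n, f n + f (-1 - n) = 0) (a : ℤ) :
    ∑ n ∈ Finset.Ico (-a) a, f n = 0 := by
  refine Finset.sum_involution (fun n _ => -1 - n) (fun n _ => hf n) ?_ ?_ ?_
  · intro n _ _
    omega
  · intro n hn
    rw [Finset.mem_Ico] at hn ⊢
    omega
  · intro n _
    omega

lemma sum_Ioo_neg_self_eq_of_reflect (hf : ∀ n, f n + f (-1 - n) = 0) {a : ℤ} (ha : 0 < a) :
    ∑ n ∈ Finset.Ioo (-a) a, f n = f (a - 1) := by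
  have split_last : Finset.Ioo (-a) a = insert (a - 1) (Finset.Ico (-(a - 1)) (a - 1)) := by
    ext n
    simp only [Finset.mem_Ioo, Finset.mem_insert, Finset.mem_Ico]
    omega
  rw [split_last, Finset.sum_insert Finset.right_notMem_Ico,
    sum_Ico_neg_self_eq_zero_of_reflect hf, add_zero]

lemma tendsto_sum_Ioo_neg_self_of_reflect {l : Filter M} (hf : ∀ n, f n + f (-1 - n) = 0)
    (hlim : Tendsto f atTop l) :
    Tendsto (fun N : ℕ => ∑ n ∈ Finset.Ioo (-(N : ℤ)) N, f n) atTop l := by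
  have hpred : Tendsto (fun N : ℕ => (N : ℤ) - 1) atTop atTop :=
    tendsto_atTop_add_const_right _ (-1) tendsto_natCast_atTop_atTop
  refine (hlim.comp hpred).congr' ?_
  filter_upwards [eventually_gt_atTop 0] with N hN
  exact (sum_Ioo_neg_self_eq_of_reflect hf (Int.natCast_pos.mpr hN)).symm

end Reflection

section RowSum

variable {x : ℝ}

lemma summable_one_div_mul_int_sq_add_sq (hx : x ≠ 0) (y : ℝ) :
    Summable fun m : ℤ => 1 / ((x * m) ^ 2 + y ^ 2) := by
  have hsum : Summable fun m : ℤ => 1 / x ^ 2 * (1 / (m : ℝ) ^ 2) :=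
    (Real.summable_one_div_int_pow.mpr one_lt_two).mul_left _
  refine hsum.of_norm_bounded_eventually ?_
  filter_upwards [eventually_cofinite_ne 0] with m hm
  rw [Real.norm_of_nonneg (by positivity), one_div_mul_one_div, ← mul_pow]
  gcongr
  exact le_add_of_nonneg_right (sq_nonneg y)

lemma tendsto_tsum_one_div_mul_int_sq_add_sq (hx : x ≠ 0) :
    Tendsto (fun y : ℝ => ∑' m : ℤ, 1 / ((x * m) ^ 2 + y ^ 2)) atTop (nhds 0) := by
  rw [← tsum_zero (α := ℝ) (β := ℤ)]
  refine tendsto_tsum_of_dominated_convergence (summable_one_div_mul_int_sq_add_sq hx 1) ?_ ?_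
  · intro m
    exact (tendsto_atTop_add_const_left _ _ (tendsto_pow_atTop two_ne_zero)).const_div_atTop 1
  · filter_upwards [eventually_ge_atTop 1] with y hy m
    rw [Real.norm_of_nonneg (by positivity)]
    gcongr

/-- The contribution of the row `n` to the lattice sum `F_{(2,1)}(x)`, i.e. its inner sum over
`m`. -/
noncomputable def alternatingRowSum (x : ℝ) (n : ℤ) : ℝ :=
  ∑' m : ℤ, (-1 : ℝ) ^ (m + n) / ((x * m) ^ 2 + (2 * (n : ℝ) + 1) ^ 2)

lemma neg_one_zpow_add_reflect {K : Type*} [DivisionRing K] (m n : ℤ) :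
    (-1 : K) ^ (m + (-1 - n)) = -(-1 : K) ^ (m + n) := by
  have hodd : Odd (2 * n + 1) := odd_two_mul_add_one n
  rw [show m + (-1 - n) = m + n - (2 * n + 1) by ring,
    zpow_sub₀ (neg_ne_zero.mpr one_ne_zero), hodd.neg_one_zpow, div_neg, div_one]

lemma alternatingRowSum_reflect (x : ℝ) (n : ℤ) :
    alternatingRowSum x (-1 - n) = -alternatingRowSum x n := by
  have hsq : (2 * ((-1 - n : ℤ) : ℝ) + 1) ^ 2 = (2 * (n : ℝ) + 1) ^ 2 := by
    push_cast
    ring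
  simp only [alternatingRowSum, hsq, neg_one_zpow_add_reflect, neg_div, tsum_neg]

lemma norm_alternatingRowSum_le (hx : x ≠ 0) (n : ℤ) :
    ‖alternatingRowSum x n‖ ≤ ∑' m : ℤ, 1 / ((x * m) ^ 2 + (2 * (n : ℝ) + 1) ^ 2) := by
  refine tsum_of_norm_bounded (summable_one_div_mul_int_sq_add_sq hx _).hasSum fun m => ?_
  rw [norm_div, norm_zpow, norm_neg, norm_one, one_zpow, Real.norm_of_nonneg (by positivity)]

lemma tendsto_alternatingRowSum_atTop (hx : x ≠ 0) :
    Tendsto (alternatingRowSum x) atTop (nhds 0) := by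
  have hodd : Tendsto (fun n : ℤ => 2 * (n : ℝ) + 1) atTop atTop :=
    tendsto_atTop_add_const_right _ 1 (tendsto_intCast_atTop_atTop.const_mul_atTop two_pos)
  exact squeeze_zero_norm (norm_alternatingRowSum_le hx)
    ((tendsto_tsum_one_div_mul_int_sq_add_sq hx).comp hodd)

end RowSum

/-- For every real `x > 0`, `F_{(2,1)}(x) = 0`. -/
theorem F21_eq_zero (x : ℝ) (hx : 0 < x) :
    Tendsto (fun N : ℕ => ∑ n ∈ Finset.Ioo (-(N : ℤ)) (N : ℤ),
        ∑' m : ℤ, (-1 : ℝ) ^ (m + n) / ((x * m) ^ 2 + (2 * (n : ℝ) + 1) ^ 2))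
      atTop (nhds 0) := by
  have hcancel (n : ℤ) : alternatingRowSum x n + alternatingRowSum x (-1 - n) = 0 := by
    rw [alternatingRowSum_reflect, add_neg_cancel]
  exact tendsto_sum_Ioo_neg_self_of_reflect hcancel (tendsto_alternatingRowSum_atTop hx.ne')
end

section
/- Let a ≥ 2 and b be integers with gcd(a,b) = 1, let r be a real number with |r| < 1, and set ω = e^{πi/a}. Then Σ_{n∈ℤ} (−1)^n r^{|a n + b|} / |a n + b| = −(1/a) · Σ_{j=0}^{a−1} ω^{−(2j+1)b} · log( (1 − ω^{2j+1} r)(1 − ω^{−(2j+1)} r) ), where log denotes the real logarithm of the quantity (1 − ω^{2j+1} r)(1 − ω^{−(2j+1)} r) = 1 − 2 cos(π(2j+1)/a) r + r², which is a positive real number. -/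
open Filter

/-!
Expand `-log ((1 - z r) (1 - z⁻¹ r))` as the two-sided series `∑_k z ^ k r ^ |k| / |k|`. Averaging
it over the points `z = ω ^ (2 j + 1) = ω (ω ^ 2) ^ j` against `z ^ (-b)` is a discrete Fourier
transform modulo `a`: since `ω ^ 2` is a primitive `a`-th root of unity, only the terms
`k = a n + b` survive, and each keeps the weight `ω ^ (a n) = (-1) ^ n`.
-/

section Multisection

variable {K : Type*} [Field K] {n : ℕ} {ζ : K}

lemma sum_range_pow_zpow_of_isPrimitiveRoot (hζ : IsPrimitiveRoot ζ n) (m : ℤ) :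
    ∑ j ∈ Finset.range n, (ζ ^ j) ^ m = if (n : ℤ) ∣ m then (n : K) else 0 := by
  have hcomm (j : ℕ) : (ζ ^ j) ^ m = (ζ ^ m) ^ j := by
    simp only [← zpow_natCast, ← zpow_mul, mul_comm]
  simp only [hcomm]
  split_ifs with hdvd
  · simp [(hζ.zpow_eq_one_iff_dvd m).2 hdvd]
  · have hne : ζ ^ m ≠ 1 := mt (hζ.zpow_eq_one_iff_dvd m).1 hdvd
    rw [geom_sum_eq hne, ← hcomm, hζ.pow_eq_one, one_zpow, sub_self, zero_div]

lemma hasSum_zpow_mul_comp_mul_add [TopologicalSpace K] [IsTopologicalSemiring K] [NeZero n]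
    (hζ : IsPrimitiveRoot ζ n) {ω : K} (hω : ω ≠ 0) {f : ℤ → K} {F : ℕ → K}
    (hf : ∀ j ∈ Finset.range n, HasSum (fun k : ℤ ↦ (ω * ζ ^ j) ^ k * f k) (F j)) (b : ℤ) :
    HasSum (fun m : ℤ ↦ ω ^ (n * m) * f (n * m + b))
      ((n : K)⁻¹ * ∑ j ∈ Finset.range n, (ω * ζ ^ j) ^ (-b) * F j) := by
  have hn : (n : K) ≠ 0 := hζ.neZero'.ne
  have hpoint (j : ℕ) : ω * ζ ^ j ≠ 0 := mul_ne_zero hω (pow_ne_zero j (hζ.ne_zero NeZero.out))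
  have hcoeff (k : ℤ) :
      (n : K)⁻¹ * ∑ j ∈ Finset.range n, (ω * ζ ^ j) ^ (-b) * ((ω * ζ ^ j) ^ k * f k) =
        if (n : ℤ) ∣ k - b then ω ^ (k - b) * f k else 0 := by
    have hterm (j : ℕ) : (ω * ζ ^ j) ^ (-b) * ((ω * ζ ^ j) ^ k * f k) =
        (ζ ^ j) ^ (k - b) * (ω ^ (k - b) * f k) := by
      rw [← mul_assoc, ← zpow_add₀ (hpoint j), neg_add_eq_sub, mul_zpow]
      ring
    simp only [hterm, ← Finset.sum_mul, sum_range_pow_zpow_of_isPrimitiveRoot hζ]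
    split_ifs <;> simp [hn]
  have hsum := (hasSum_sum fun j hj ↦ (hf j hj).mul_left ((ω * ζ ^ j) ^ (-b))).mul_left (n : K)⁻¹
  simp only [hcoeff] at hsum
  have hinj : Function.Injective fun m : ℤ ↦ (n : ℤ) * m + b :=
    (add_left_injective b).comp (mul_right_injective₀ (NeZero.ne (n : ℤ)))
  rw [← hinj.hasSum_iff] at hsum
  · simpa [Function.comp_def] using hsum
  · intro k hk
    refine if_neg fun ⟨m, hm⟩ ↦ hk ⟨m, ?_⟩
    simp [← hm]

end Multisection

section LogSeries

lemma log_mul_of_re_pos {x y : ℂ} (hx : 0 < x.re) (hy : 0 < y.re) :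
    Complex.log (x * y) = Complex.log x + Complex.log y := by
  have harg_x := abs_lt.1 (Complex.abs_arg_lt_pi_div_two_iff.2 (.inl hx))
  have harg_y := abs_lt.1 (Complex.abs_arg_lt_pi_div_two_iff.2 (.inl hy))
  refine Complex.log_mul (Complex.ne_zero_of_re_pos hx) (Complex.ne_zero_of_re_pos hy) ⟨?_, ?_⟩ <;>
    linarith

lemma one_sub_re_pos_of_norm_lt_one {z : ℂ} (hz : ‖z‖ < 1) : 0 < (1 - z).re := by
  simpa using (Complex.re_le_norm z).trans_lt hz

lemma hasSum_zpow_mul_pow_natAbs_div_natAbs {z r : ℂ} (hzr : ‖z * r‖ < 1) (hzr' : ‖z⁻¹ * r‖ < 1) :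
    HasSum (fun k : ℤ ↦ z ^ k * (r ^ k.natAbs / k.natAbs))
      (-Complex.log ((1 - z * r) * (1 - z⁻¹ * r))) := by
  have hnonneg : HasSum (fun k : ℕ ↦ z ^ (k : ℤ) * (r ^ (k : ℤ).natAbs / (k : ℤ).natAbs))
      (-Complex.log (1 - z * r)) := by
    simpa [mul_pow, mul_div_assoc] using Complex.hasSum_taylorSeries_neg_log hzr
  have hnonpos : HasSum (fun k : ℕ ↦ z ^ (-k : ℤ) * (r ^ (-k : ℤ).natAbs / (-k : ℤ).natAbs))
      (-Complex.log (1 - z⁻¹ * r)) := by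
    simpa [mul_pow, mul_div_assoc] using Complex.hasSum_taylorSeries_neg_log hzr'
  rw [log_mul_of_re_pos (one_sub_re_pos_of_norm_lt_one hzr) (one_sub_re_pos_of_norm_lt_one hzr'),
    neg_add]
  -- The term at `k = 0`, common to both halves, vanishes because division by zero gives zero.
  simpa using HasSum.of_nat_of_neg (f := fun k : ℤ ↦ z ^ k * (r ^ k.natAbs / k.natAbs))
    hnonneg hnonpos

end LogSeries

lemma isPrimitiveRoot_exp_pi_mul_I_div {n : ℕ} (hn : n ≠ 0) :
    IsPrimitiveRoot (Complex.exp (Real.pi * Complex.I / n)) (2 * n) := by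
  convert Complex.isPrimitiveRoot_exp (2 * n) (by simpa using hn) using 2
  push_cast
  field_simp

lemma pow_eq_neg_one_of_isPrimitiveRoot_two_mul {R : Type*} [CommRing R] [NoZeroDivisors R]
    {n : ℕ} (hn : n ≠ 0) {ω : R} (hω : IsPrimitiveRoot ω (2 * n)) : ω ^ n = -1 :=
  (hω.pow (by lia) (mul_comm 2 n)).eq_neg_one_of_two_right

theorem log_sum_evaluation_general {a : ℕ} (ha : a ≠ 0) {b : ℤ} (_hb : ¬ (a : ℤ) ∣ b)
    {r : ℂ} (hr : ‖r‖ < 1) {ω : ℂ} (hω : IsPrimitiveRoot ω (2 * a)) :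
    HasSum (fun n : ℤ ↦ (-1 : ℂ) ^ n * r ^ (a * n + b).natAbs / (a * n + b).natAbs)
      (-(1 / (a : ℂ)) * ∑ j ∈ Finset.range a, ω ^ (-((2 * (j : ℤ) + 1) * b)) *
        Complex.log ((1 - ω ^ (2 * (j : ℤ) + 1) * r) * (1 - ω ^ (-(2 * (j : ℤ) + 1)) * r))) := by
  have : NeZero a := ⟨ha⟩
  have hω0 : ω ≠ 0 := hω.ne_zero (by lia)
  have hnorm : ‖ω‖ = 1 := hω.norm'_eq_one (by lia)
  have hodd (j : ℕ) : ω * (ω ^ 2) ^ j = ω ^ (2 * (j : ℤ) + 1) := by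
    rw [zpow_add_one₀ hω0, zpow_mul, mul_comm]
    norm_cast
  have hseries (j : ℕ) := hasSum_zpow_mul_pow_natAbs_div_natAbs
    (z := ω * (ω ^ 2) ^ j) (r := r) (by simpa [hnorm] using hr) (by simpa [hnorm] using hr)
  have hsq : IsPrimitiveRoot (ω ^ 2) a := hω.pow (by lia) rfl
  have hweight (n : ℤ) : ω ^ (a * n) = (-1) ^ n := by
    rw [zpow_mul, zpow_natCast, pow_eq_neg_one_of_isPrimitiveRoot_two_mul ha hω]
  have hsum := hasSum_zpow_mul_comp_mul_add hsq hω0 (fun j _ ↦ hseries j) b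
  simpa only [hodd, hweight, ← zpow_mul, ← zpow_neg, mul_neg, Finset.sum_neg_distrib, one_div,
    neg_mul, mul_div_assoc] using hsum

/-- For integers `a ≥ 2`, `b` with `gcd(a,b) = 1`, real `|r| < 1`, and `ω = exp(πi/a)`,
`∑_{n∈ℤ} (-1)^n r^{|an+b|}/|an+b|
  = -(1/a) ∑_{j=0}^{a-1} ω^{-(2j+1)b} log((1 - ω^{2j+1} r)(1 - ω^{-(2j+1)} r))`,
where each quantity `(1 - ω^{2j+1} r)(1 - ω^{-(2j+1)} r)` is a positive real number and the
logarithm is its (real) logarithm, i.e. the principal complex logarithm. -/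
theorem log_sum_evaluation (a b : ℤ) (ha : 2 ≤ a) (hab : Int.gcd a b = 1)
    (r : ℝ) (hr : |r| < 1) (ω : ℂ) (hω : ω = Complex.exp (Real.pi * Complex.I / a)) :
    ((∑' n : ℤ, (-1 : ℝ) ^ n * r ^ (a * n + b).natAbs / ((a * n + b).natAbs : ℝ)) : ℂ)
      = -(1 / (a : ℂ)) *
        ∑ j ∈ Finset.range a.toNat,
          ω ^ (-((2 * (j : ℤ) + 1) * b)) *
            Complex.log ((1 - ω ^ (2 * (j : ℤ) + 1) * (r : ℂ)) *
              (1 - ω ^ (-(2 * (j : ℤ) + 1)) * (r : ℂ))) := by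
  lift a to ℕ using by lia
  have hndvd : ¬ (a : ℤ) ∣ b := fun hdvd ↦ by
    have := Int.gcd_eq_natAbs_left hdvd
    lia
  subst hω
  have hω := isPrimitiveRoot_exp_pi_mul_I_div (n := a) (by lia)
  simpa [-Nat.cast_natAbs] using
    (log_sum_evaluation_general (by lia) hndvd (r := r) (by simpa using hr) hω).tsum_eq
end
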